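/- Let k be a field and A a finite-dimensional k-algebra such that A/rad(A) is a separable k-algebra. If the trivial extension algebra T(A) is twisted periodic, then A has finite global dimension. -/

import Mathlib

open TensorProduct

/-- There is an exact sequence `0 → M → P_n → ⋯ → P_1 → N → 0` of `R`-modules
(so with `n` middle terms) in which each middle term `P_i` is projective. -/
def HasProjExactSeq (R : Type) [Ring R] (M N : ModuleCat R) (n : ℕ) : Prop :=
  ∃ (P : ℕ → ModuleCat R) (d : ∀ i, P (i + 1) →ₗ[R] P i)
    (_ : (P 0 : Type) ≃ₗ[R] N) (_ : (M : Type) ≃ₗ[R] P (n + 1)),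
    (∀ i, 1 ≤ i → i ≤ n → Module.Projective R (P i)) ∧
    Function.Surjective (d 0) ∧ Function.Injective (d n) ∧
    ∀ i < n, LinearMap.range (d (i + 1)) = LinearMap.ker (d i)

/-- The regular bimodule `B` as a module over the enveloping algebra `B ⊗[k] Bᵐᵒᵖ`. -/
noncomputable def regularBimodule (k B : Type) [Field k] [Ring B] [Algebra k B] :
    ModuleCat (B ⊗[k] Bᵐᵒᵖ) :=
  letI : Module (B ⊗[k] Bᵐᵒᵖ) B := TensorProduct.Algebra.module
  ModuleCat.of _ B

/-- The twisted bimodule `₁B_φ` (underlying set `B`, right action twisted by `φ`,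
i.e. `a • x • b = a * x * φ b`) as a module over the enveloping algebra `B ⊗[k] Bᵐᵒᵖ`. -/
noncomputable def twistedBimodule (k B : Type) [Field k] [Ring B] [Algebra k B]
    (φ : B ≃ₐ[k] B) : ModuleCat (B ⊗[k] Bᵐᵒᵖ) :=
  letI : Module (B ⊗[k] Bᵐᵒᵖ) B := TensorProduct.Algebra.module
  letI : Module (B ⊗[k] Bᵐᵒᵖ) B :=
    Module.compHom B
      (Algebra.TensorProduct.map (AlgHom.id k B) (AlgEquiv.op φ).toAlgHom).toRingHom
  ModuleCat.of _ B

/-- A finite-dimensional `k`-algebra `B` is twisted periodic if there are `n ≥ 1`, an algebra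
automorphism `φ` of `B`, and an exact sequence `0 → ₁B_φ → P_{n-1} → ⋯ → P_0 → B → 0` of
bimodules with all `P_i` projective over `B ⊗[k] Bᵐᵒᵖ`. -/
noncomputable def IsTwistedPeriodicAlgebra (k B : Type) [Field k] [Ring B] [Algebra k B] : Prop :=
  ∃ (n : ℕ) (φ : B ≃ₐ[k] B), 1 ≤ n ∧
    HasProjExactSeq (B ⊗[k] Bᵐᵒᵖ) (twistedBimodule k B φ) (regularBimodule k B) n

/-- The `R`-module `M` has projective dimension at most `d`: there is a projective
resolution `⋯ → P_1 → P_0 → M → 0` which vanishes in degrees `> d`. -/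
def ProjDimLE (R : Type) [Ring R] (M : Type) [AddCommGroup M] [Module R M] (d : ℕ) : Prop :=
  ∃ (P : ℕ → ModuleCat R) (f : ∀ i, P (i + 1) →ₗ[R] P i) (π : (P 0 : Type) →ₗ[R] M),
    (∀ i, Module.Projective R (P i)) ∧ Function.Surjective π ∧
    LinearMap.range (f 0) = LinearMap.ker π ∧
    (∀ i, LinearMap.range (f (i + 1)) = LinearMap.ker (f i)) ∧
    ∀ i, d < i → Subsingleton (P i)

/-- The ring `R` has finite global dimension: there is a `d` such that every `R`-module has
projective dimension at most `d`. -/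
def HasFiniteGlobalDimension (R : Type) [Ring R] : Prop :=
  ∃ d : ℕ, ∀ (M : Type) [AddCommGroup M] [Module R M], ProjDimLE R M d

section DualBimodule

variable (k A : Type) [Field k] [Ring A] [Algebra k A]

/-- The left `A`-action on `D(A) = Hom_k(A, k)`, given by `(a • f) x = f (x * a)`. -/
noncomputable instance Module.Dual.leftModule : Module A (Module.Dual k A) where
  smul a f := f ∘ₗ LinearMap.mulRight k a
  one_smul f := LinearMap.ext fun x => by show f (x * 1) = f x; rw [mul_one]
  mul_smul a b f := LinearMap.ext fun x => by
    show f (x * (a * b)) = f (x * a * b); rw [mul_assoc]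
  smul_zero a := LinearMap.ext fun x => by show (0 : Module.Dual k A) (x * a) = 0; rfl
  smul_add a f g := LinearMap.ext fun x => by
    show (f + g) (x * a) = f (x * a) + g (x * a); rfl
  add_smul a b f := LinearMap.ext fun x => by
    show f (x * (a + b)) = f (x * a) + f (x * b); rw [mul_add, map_add]
  zero_smul f := LinearMap.ext fun x => by show f (x * 0) = 0; rw [mul_zero, map_zero]

/-- The right `A`-action on `D(A) = Hom_k(A, k)`, given by `(f • op b) x = f (b * x)`. -/
noncomputable instance Module.Dual.rightModule : Module Aᵐᵒᵖ (Module.Dual k A) where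
  smul b f := f ∘ₗ LinearMap.mulLeft k b.unop
  one_smul f := LinearMap.ext fun x => by show f (1 * x) = f x; rw [one_mul]
  mul_smul a b f := LinearMap.ext fun x => by
    show f ((a * b).unop * x) = f (b.unop * (a.unop * x))
    rw [MulOpposite.unop_mul, mul_assoc]
  smul_zero a := LinearMap.ext fun x => by show (0 : Module.Dual k A) (a.unop * x) = 0; rfl
  smul_add a f g := LinearMap.ext fun x => by
    show (f + g) (a.unop * x) = f (a.unop * x) + g (a.unop * x); rfl
  add_smul a b f := LinearMap.ext fun x => by
    show f ((a + b).unop * x) = f (a.unop * x) + f (b.unop * x)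
    rw [MulOpposite.unop_add, add_mul, map_add]
  zero_smul f := LinearMap.ext fun x => by
    show f ((0 : Aᵐᵒᵖ).unop * x) = 0
    rw [MulOpposite.unop_zero, zero_mul, map_zero]

instance : SMulCommClass A Aᵐᵒᵖ (Module.Dual k A) where
  smul_comm a b f := LinearMap.ext fun x => by
    show f (b.unop * (x * a)) = f (b.unop * x * a); rw [mul_assoc]

instance : IsScalarTower k A (Module.Dual k A) where
  smul_assoc c a f := LinearMap.ext fun x => by
    show f (x * (c • a)) = c • f (x * a)
    rw [mul_smul_comm, map_smul]

instance : IsScalarTower k Aᵐᵒᵖ (Module.Dual k A) where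
  smul_assoc c b f := LinearMap.ext fun x => by
    show f ((c • b).unop * x) = c • f (b.unop * x)
    rw [MulOpposite.unop_smul, smul_mul_assoc, map_smul]

/-- The trivial extension algebra `T(A) = A ⊕ D(A)`. -/
noncomputable abbrev TrivialExtension : Type := TrivSqZeroExt A (Module.Dual k A)


end DualBimodule


namespace TPer

/-- restriction of scalars along `σ`, as a type synonym -/
def Res {R S : Type} [Ring R] [Ring S] (_ : R →+* S) (X : Type) : Type := X

section Res
variable {R S : Type} [Ring R] [Ring S] (σ : R →+* S) (X : Type) [AddCommGroup X] [Module S X]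

instance : AddCommGroup (Res σ X) := inferInstanceAs (AddCommGroup X)
noncomputable instance : Module R (Res σ X) := Module.compHom X σ

/-- identity into `Res` -/
def toRes : X ≃+ Res σ X := AddEquiv.refl X

variable {X}

theorem toRes_smul (r : R) (x : X) : toRes σ X (σ r • x) = r • toRes σ X x := rfl

theorem toRes_symm_smul (r : R) (x : Res σ X) :
    (toRes σ X).symm (r • x) = σ r • (toRes σ X).symm x := rfl

variable {Y : Type} [AddCommGroup Y] [Module S Y]
/-- functoriality of `Res` -/
def resMap (f : X →ₗ[S] Y) : Res σ X →ₗ[R] Res σ Y where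
  toFun x := toRes σ Y (f ((toRes σ X).symm x))
  map_add' x y := by simp
  map_smul' r x := by
    rw [toRes_symm_smul, map_smul, toRes_smul]; rfl

@[simp] theorem resMap_toRes (f : X →ₗ[S] Y) (x : X) :
    resMap σ f (toRes σ X x) = toRes σ Y (f x) := rfl

theorem res_projective [Module.Projective R (Res σ S)] [h : Module.Projective S X] :
    Module.Projective R (Res σ X) := by
  obtain ⟨s, hs⟩ := h
  classical
  have : Module.Projective R (X →₀ Res σ S) :=
    Module.Projective.of_equiv' (finsuppLequivDFinsupp (M := Res σ S) R).symm
  let i : Res σ X →ₗ[R] (X →₀ Res σ S) :=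
    { toFun := fun x => (Finsupp.mapRange (toRes σ S) (map_zero _) (s ((toRes σ X).symm x)))
      map_add' := fun x y => by
        ext t; simp
      map_smul' := fun r x => by
        ext t
        rw [toRes_symm_smul, map_smul]
        rfl }
  let p : (X →₀ Res σ S) →ₗ[R] Res σ X :=
    Finsupp.lsum ℕ (fun x : X =>
      { toFun := fun a => toRes σ X ((toRes σ S).symm a • x)
        map_add' := fun a b => by simp [add_smul]
        map_smul' := fun r a => by
          rw [toRes_symm_smul, smul_assoc, toRes_smul]; rfl })
  refine Module.Projective.of_split i p ?_
  ext x
  have := hs ((toRes σ X).symm x)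
  apply (toRes σ X).symm.injective
  rw [LinearMap.id_apply]
  conv_rhs => rw [← this]
  simp only [LinearMap.comp_apply, i, p, LinearMap.coe_mk, AddHom.coe_mk, Finsupp.lsum_apply,
    Finsupp.linearCombination_apply]
  rw [Finsupp.sum_mapRange_index (by simp)]
  simp [Finsupp.sum]

end Res

section Main
variable {k A B : Type} [Field k] [Ring A] [Ring B] [Algebra k A] [Algebra k B]

/-- right scalars -/
noncomputable def rho (k B : Type) [Field k] [Ring B] [Algebra k B] : Bᵐᵒᵖ →+* B ⊗[k] Bᵐᵒᵖ :=
  (Algebra.TensorProduct.includeRight : Bᵐᵒᵖ →ₐ[k] B ⊗[k] Bᵐᵒᵖ).toRingHom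

theorem rho_apply (b : Bᵐᵒᵖ) : rho k B b = 1 ⊗ₜ b := rfl

instance projE : Module.Projective Bᵐᵒᵖ (Res (rho k B) (B ⊗[k] Bᵐᵒᵖ)) := by
  let c := Algebra.TensorProduct.comm k Bᵐᵒᵖ B
  let e : (Bᵐᵒᵖ ⊗[k] B) ≃ₗ[Bᵐᵒᵖ] Res (rho k B) (B ⊗[k] Bᵐᵒᵖ) :=
    { c.toAddEquiv.trans (toRes (rho k B) _) with
      map_smul' := fun r x => by
        change toRes (rho k B) _ (c (r • x)) = r • toRes (rho k B) _ (c x)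
        rw [← toRes_smul]
        congr 1
        induction x with
        | zero => simp
        | add x y hx hy => simp only [smul_add, map_add, hx, hy]
        | tmul x y => simp [c, rho_apply, TensorProduct.smul_tmul'] }
  exact Module.Projective.of_equiv' e

/-- left scalars from `A` -/
noncomputable def lam (f : A →ₐ[k] B) : A →+* B ⊗[k] Bᵐᵒᵖ :=
  ((Algebra.TensorProduct.includeLeft : B →ₐ[k] B ⊗[k] Bᵐᵒᵖ).comp f).toRingHom

theorem lam_apply (f : A →ₐ[k] B) (a : A) : lam f a = f a ⊗ₜ 1 := rfl

section Hom
variable (k A)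
variable (M N : Type) [AddCommGroup M] [AddCommGroup N] [Module A M] [Module A N]
  [Module k M] [Module k N] [IsScalarTower k A M] [IsScalarTower k A N]

/-- left action on Hom -/
noncomputable def lAct : A →ₐ[k] Module.End k (M →ₗ[k] N) :=
  AlgHom.ofLinearMap
    { toFun := fun a => LinearMap.llcomp k M N N (Algebra.lsmul k k N a)
      map_add' := fun a b => by ext; simp
      map_smul' := fun a b => by ext; simp }
    (by ext; simp) (fun a b => by ext; simp)

/-- right action on Hom -/
noncomputable def rAct : Aᵐᵒᵖ →ₐ[k] Module.End k (M →ₗ[k] N) :=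
  AlgHom.ofLinearMap
    { toFun := fun a => LinearMap.lcomp k N (Algebra.lsmul k k M a.unop)
      map_add' := fun a b => by ext; simp
      map_smul' := fun a b => by ext; simp }
    (by ext; simp) (fun a b => by ext; simp)

variable {A}

/-- The enveloping algebra acts on Hom -/
noncomputable def envAct (g : B →ₐ[k] A) : B ⊗[k] Bᵐᵒᵖ →ₐ[k] Module.End k (M →ₗ[k] N) :=
  Algebra.TensorProduct.lift ((lAct k A M N).comp g) ((rAct k A M N).comp (AlgHom.op g))
    (fun a b => by
      ext w m
      simp [lAct, rAct])

theorem envAct_tmul (g : B →ₐ[k] A) (b : B) (c : Bᵐᵒᵖ) (w : M →ₗ[k] N) (m : M) :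
    envAct k M N g (b ⊗ₜ c) w m = g b • w (g c.unop • m) := by
  simp [envAct, lAct, rAct]

variable {k}
/-- Hom as a module over the enveloping algebra -/
def HomE (_ : B →ₐ[k] A) (M N : Type) [AddCommGroup M] [AddCommGroup N] 
  [Module k M] [Module k N] : Type := M →ₗ[k] N

variable {M N} (g : B →ₐ[k] A)
noncomputable instance : AddCommGroup (HomE g M N) := inferInstanceAs (AddCommGroup (M →ₗ[k] N))
noncomputable instance : Module (B ⊗[k] Bᵐᵒᵖ) (HomE g M N) :=
  Module.compHom (M →ₗ[k] N) (envAct k M N g).toRingHom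

/-- underlying map -/
noncomputable def HomE.un : HomE g M N ≃+ (M →ₗ[k] N) := AddEquiv.refl _

theorem HomE.un_smul (b : B ⊗[k] Bᵐᵒᵖ) (w : HomE g M N) :
    HomE.un g (b • w) = envAct k M N g b (HomE.un g w) := rfl

variable {N' : Type} [AddCommGroup N'] [Module A N'] [Module k N'] [IsScalarTower k A N']

/-- postcomposition -/
noncomputable def HomE.post (p : N →ₗ[A] N') : HomE g M N →ₗ[B ⊗[k] Bᵐᵒᵖ] HomE g M N' where
  toFun w := (HomE.un g).symm ((p.restrictScalars k) ∘ₗ HomE.un g w)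
  map_add' w w' := by
    apply (HomE.un g).injective; ext; simp
  map_smul' b w := by
    apply (HomE.un g).injective
    simp only [HomE.un_smul, AddEquiv.apply_symm_apply, RingHom.id_apply]
    ext m
    induction b with
    | zero => simp
    | add x y hx hy => simp only [map_add, LinearMap.add_apply, LinearMap.comp_add, hx, hy]
    | tmul x y => simp [envAct_tmul]

theorem HomE.post_un (p : N →ₗ[A] N') (w : HomE g M N) (m : M) :
    HomE.un g (HomE.post g p w) m = p (HomE.un g w m) := rfl

theorem HomE.post_surj (p : N →ₗ[A] N') (hp : Function.Surjective p) :
    Function.Surjective (HomE.post g p (M := M)) := by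
  intro w
  obtain ⟨v, hv⟩ := Module.projective_lifting_property (p.restrictScalars k) (HomE.un g w) hp
  refine ⟨(HomE.un g).symm v, ?_⟩
  apply (HomE.un g).injective
  rw [← hv]; rfl

end Hom

section T
variable (f : A →ₐ[k] B) (g : B →ₐ[k] A)
variable (M : Type) [AddCommGroup M] [Module A M]
variable (X Y Z : Type) [AddCommGroup X] [Module (B ⊗[k] Bᵐᵒᵖ) X]
  [AddCommGroup Y] [Module (B ⊗[k] Bᵐᵒᵖ) Y] [AddCommGroup Z] [Module (B ⊗[k] Bᵐᵒᵖ) Z]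

/-- pure tensor before quotient -/
noncomputable def pt (x : X) (m : M) : Res (lam f) X ⊗[ℤ] M := (toRes (lam f) X x) ⊗ₜ[ℤ] m

/-- relation set -/
def relSet : Set (Res (lam f) X ⊗[ℤ] M) :=
  {t | ∃ (x : X) (b : B) (m : M),
    t = pt f M X (rho k B (MulOpposite.op b) • x) m - pt f M X x (g b • m)}

/-- the tensor product of the bimodule `X` with `M` over `B` -/
def TT : Type := (Res (lam f) X ⊗[ℤ] M) ⧸ Submodule.span A (relSet f g M X)

noncomputable instance : AddCommGroup (TT f g M X) :=
  inferInstanceAs (AddCommGroup ((Res (lam f) X ⊗[ℤ] M) ⧸ Submodule.span A (relSet f g M X)))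
noncomputable instance : Module A (TT f g M X) :=
  inferInstanceAs (Module A ((Res (lam f) X ⊗[ℤ] M) ⧸ Submodule.span A (relSet f g M X)))

/-- quotient map -/
noncomputable def TT.mkQ : Res (lam f) X ⊗[ℤ] M →ₗ[A] TT f g M X :=
  Submodule.mkQ (Submodule.span A (relSet f g M X))

variable {X M}
/-- pure tensor -/
noncomputable def TT.mk (x : X) (m : M) : TT f g M X := TT.mkQ f g M X (pt f M X x m)

theorem TT.mk_add_left (x y : X) (m : M) : TT.mk f g (x + y) m = TT.mk f g x m + TT.mk f g y m := by
  simp [TT.mk, pt, TensorProduct.add_tmul]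

theorem TT.mk_add_right (x : X) (m m' : M) :
    TT.mk f g x (m + m') = TT.mk f g x m + TT.mk f g x m' := by
  simp [TT.mk, pt, TensorProduct.tmul_add]

theorem TT.smul_mk (a : A) (x : X) (m : M) :
    a • TT.mk f g x m = TT.mk f g (lam f a • x) m := by
  rw [TT.mk, TT.mk, ← map_smul]; rfl

theorem TT.mk_balance (x : X) (b : B) (m : M) :
    TT.mk f g (rho k B (MulOpposite.op b) • x) m = TT.mk f g x (g b • m) := by
  rw [← sub_eq_zero, TT.mk, TT.mk, ← map_sub]
  exact (Submodule.Quotient.mk_eq_zero _).2 (Submodule.subset_span ⟨x, b, m, rfl⟩)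

theorem TT.induction {p : TT f g M X → Prop} (h0 : p 0) (hmk : ∀ x m, p (TT.mk f g x m))
    (hadd : ∀ s t, p s → p t → p (s + t)) (t : TT f g M X) : p t := by
  obtain ⟨t, rfl⟩ := Submodule.mkQ_surjective _ t
  induction t with
  | zero => exact h0
  | tmul x m => exact hmk x m
  | add s t hs ht => rw [map_add]; exact hadd _ _ hs ht

theorem TT.addHom_ext {G : Type} [AddCommGroup G] {p q : TT f g M X →+ G}
    (h : ∀ x m, p (TT.mk f g x m) = q (TT.mk f g x m)) : p = q := by
  ext t
  induction t using TT.induction f g with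
  | h0 => simp
  | hmk x m => exact h x m
  | hadd s t hs ht => rw [map_add, map_add, hs, ht]

theorem lam_rho_comm (a : A) (b : Bᵐᵒᵖ) (x : X) :
    lam f a • rho k B b • x = rho k B b • lam f a • x := by
  rw [smul_smul, smul_smul]; simp [lam_apply, rho_apply]

/-- lifting balanced biadditive maps -/
theorem TT.exists_lift {G : Type} [AddCommGroup G] (w : X →+ M →+ G)
    (hw : ∀ (x : X) (b : B) (m : M), w (rho k B (MulOpposite.op b) • x) m = w x (g b • m)) :
    ∃ W : TT f g M X →+ G, ∀ x m, W (TT.mk f g x m) = w x m := by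
  let W0 : Res (lam f) X ⊗[ℤ] M →+ G :=
    TensorProduct.liftAddHom (w.comp (toRes (lam f) X).symm.toAddMonoidHom) (by
      intro r x m; simp)
  have hW0 : ∀ x m, W0 (pt f M X x m) = w x m := fun x m => rfl
  have hker : ∀ t ∈ (Submodule.span A (relSet f g M X)).toAddSubgroup, W0 t = 0 := by
    intro t ht
    refine Submodule.closure_induction (p := fun t _ => W0 t = 0) (map_zero _) ?_ ?_ ht
    · intro x y _ _ hx hy; rw [map_add, hx, hy, add_zero]
    · rintro a _ ⟨x, b, m, rfl⟩
      have : a • (pt f M X (rho k B (MulOpposite.op b) • x) m - pt f M X x (g b • m)) =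
          pt f M X (rho k B (MulOpposite.op b) • lam f a • x) m
            - pt f M X (lam f a • x) (g b • m) := by
        rw [← lam_rho_comm]
        simp [pt, toRes_smul, ← TensorProduct.smul_tmul', smul_sub]
      rw [this, map_sub, hW0, hW0, hw, sub_self]
  exact ⟨QuotientAddGroup.lift _ W0 hker, fun x m => rfl⟩

/-- functoriality for right-linear maps -/
theorem TT.exists_addMap (θ : X →+ Y)
    (hθ : ∀ (b : Bᵐᵒᵖ) (x : X), θ (rho k B b • x) = rho k B b • θ x) :
    ∃ W : TT f g M X →+ TT f g M Y, ∀ x m, W (TT.mk f g x m) = TT.mk f g (θ x) m := by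
  refine TT.exists_lift f g (AddMonoidHom.mk' (fun x => AddMonoidHom.mk' 
    (fun m => TT.mk f g (θ x) m) ?_) ?_) ?_
  · intro m m'; exact TT.mk_add_right f g _ _ _
  · intro x y; ext m; simp [TT.mk_add_left]
  · intro x b m; simp [hθ, TT.mk_balance]

theorem TT.exists_map (θ : X →ₗ[B ⊗[k] Bᵐᵒᵖ] Y) :
    ∃ W : TT f g M X →ₗ[A] TT f g M Y, ∀ x m, W (TT.mk f g x m) = TT.mk f g (θ x) m := by
  obtain ⟨W, hW⟩ := TT.exists_addMap (M := M) f g Y θ.toAddMonoidHom (fun b x => θ.map_smul _ _)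
  refine ⟨{ W with map_smul' := ?_ }, hW⟩
  intro a t
  change W (a • t) = a • W t
  induction t using TT.induction f g with
  | h0 => simp
  | hmk x m => rw [TT.smul_mk, hW, hW, TT.smul_mk]; simp
  | hadd s t hs ht => rw [smul_add, map_add, hs, ht, map_add, smul_add]

set_option linter.unusedSectionVars false
variable {N : Type} [AddCommGroup N] [Module A N] 
  [Module k M] [Module k N] [IsScalarTower k A M] [IsScalarTower k A N]

theorem TT.exists_eval (hfg : ∀ a, g (f a) = a) (v : X →ₗ[B ⊗[k] Bᵐᵒᵖ] HomE g M N) :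
    ∃ W : TT f g M X →ₗ[A] N, ∀ x m, W (TT.mk f g x m) = HomE.un g (v x) m := by
  obtain ⟨W, hW⟩ := TT.exists_lift f g (M := M) (X := X) (G := N)
    (AddMonoidHom.mk' (fun x => (HomE.un g (v x)).toAddMonoidHom) (by intro x y; ext; simp))
    (by intro x b m; simp [HomE.un_smul, rho_apply, envAct_tmul])
  refine ⟨{ W with map_smul' := ?_ }, hW⟩
  intro a t
  change W (a • t) = a • W t
  induction t using TT.induction f g with
  | h0 => simp
  | hmk x m =>
    rw [TT.smul_mk, hW, hW]; simp [HomE.un_smul, lam_apply, envAct_tmul, hfg]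
  | hadd s t hs ht => rw [smul_add, map_add, hs, ht, map_add, smul_add]


theorem ker_tensor (hI : ∀ b : B, (∀ i, g i = 0 → i * b = 0) → g b = 0)
    (y : B ⊗[k] M) (hy : ∀ i : B, g i = 0 → LinearMap.rTensor M (LinearMap.mulLeft k i) y = 0) :
    LinearMap.rTensor M g.toLinearMap y = 0 := by
  classical
  let bs := Module.Basis.ofVectorSpace k M
  have key : ∀ (C : Type) [AddCommGroup C] [Module k C] (l : B →ₗ[k] C) (y : B ⊗[k] M) (j),
      TensorProduct.equivFinsuppOfBasisRight bs (LinearMap.rTensor M l y) j =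
        l (TensorProduct.equivFinsuppOfBasisRight bs y j) := by
    intro C _ _ l y j
    induction y with
    | zero => simp
    | tmul b m => simp [TensorProduct.equivFinsuppOfBasisRight_apply_tmul]
    | add s t hs ht => simp [hs, ht]
  apply (TensorProduct.equivFinsuppOfBasisRight bs).injective
  ext j
  rw [key, map_zero, Finsupp.zero_apply]
  apply hI
  intro i hi
  have := key _ (LinearMap.mulLeft k i) y j
  rw [hy i hi] at this
  simpa using this.symm

/-- the condition on `z` -/
def Cond (M : Type) [AddCommGroup M] [Module A M] (z : X) : Prop :=
  ∀ i : B, g i = 0 → ∃ c : B, (∀ m : M, g c • m = 0) ∧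
    ((i ⊗ₜ[k] (1 : Bᵐᵒᵖ)) • z = ((1 : B) ⊗ₜ[k] MulOpposite.op c) • z)

theorem kill_E (hI : ∀ b : B, (∀ i, g i = 0 → i * b = 0) → g b = 0)
    (e : B ⊗[k] Bᵐᵒᵖ) (he : Cond g M e) (w : HomE g M N) : e • w = 0 := by
  apply (HomE.un g).injective
  rw [HomE.un_smul, map_zero]
  ext m
  let Th : B ⊗[k] Bᵐᵒᵖ →ₗ[k] B ⊗[k] M := LinearMap.lTensor B
    ((Algebra.lsmul k k M).toLinearMap.flip m ∘ₗ g.toLinearMap ∘ₗ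
      (MulOpposite.opLinearEquiv k).symm.toLinearMap)
  have hTh : ∀ b c, Th (b ⊗ₜ c) = b ⊗ₜ (g c.unop • m) := fun b c => by simp [Th]
  have h1 : LinearMap.rTensor M g.toLinearMap (Th e) = 0 := by
    apply ker_tensor g hI
    intro i hi
    obtain ⟨c, hc, hic⟩ := he i hi
    have a1 : ∀ e, LinearMap.rTensor M (LinearMap.mulLeft k i) (Th e) =
        Th ((i ⊗ₜ[k] (1 : Bᵐᵒᵖ)) • e) := by
      intro e
      induction e with
      | zero => simp
      | tmul b d => simp [hTh]
      | add s t hs ht => simp only [map_add, smul_add, hs, ht]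
    have a2 : ∀ e, Th (((1 : B) ⊗ₜ[k] MulOpposite.op c) • e) = 0 := by
      intro e
      induction e with
      | zero => simp
      | tmul b d => simp [hTh, mul_smul, hc]
      | add s t hs ht => simp only [map_add, smul_add, hs, ht, add_zero]
    rw [a1, hic, a2]
  let mu : A ⊗[k] M →ₗ[k] N := TensorProduct.lift
    ((LinearMap.lcomp k N (HomE.un g w)) ∘ₗ (Algebra.lsmul k k N).toLinearMap)
  have h2 : ∀ e, mu (LinearMap.rTensor M g.toLinearMap (Th e)) = envAct k M N g e (HomE.un g w) m := by
    intro e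
    induction e with
    | zero => simp
    | tmul b d => simp [hTh, mu, envAct_tmul]
    | add s t hs ht => simp only [map_add, hs, ht, LinearMap.add_apply]
  rw [← h2, h1]; simp

theorem kill_P (hI : ∀ b : B, (∀ i, g i = 0 → i * b = 0) → g b = 0)
    [hP : Module.Projective (B ⊗[k] Bᵐᵒᵖ) X] (w : X →ₗ[B ⊗[k] Bᵐᵒᵖ] HomE g M N)
    (z : X) (hz : Cond g M z) : w z = 0 := by
  obtain ⟨s, hs⟩ := hP
  rw [← hs z, Finsupp.linearCombination_apply, Finsupp.sum, map_sum]
  refine Finset.sum_eq_zero fun x _ => ?_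
  rw [map_smul]
  apply kill_E g hI
  intro i hi
  obtain ⟨c, hc, hic⟩ := hz i hi
  refine ⟨c, hc, ?_⟩
  have := congrArg (fun t => s t x) hic
  simpa using this

variable (M)
/-- the state of the induction -/
def St (pos : Prop) (Z : Type) [AddCommGroup Z] [Module (B ⊗[k] Bᵐᵒᵖ) Z]
    (N : Type) [AddCommGroup N] [Module A N] [Module k N] [IsScalarTower k A N] : Prop :=
  Module.Projective Bᵐᵒᵖ (Res (rho k B) Z) ∧
  ∃ (u : N →ₗ[A] TT f g M Z) (v : Z →ₗ[B ⊗[k] Bᵐᵒᵖ] HomE g M N) (W : TT f g M Z →ₗ[A] N),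
    (∀ x m, W (TT.mk f g x m) = HomE.un g (v x) m) ∧
    (pos → ∀ z, Cond g M z → v z = 0) ∧
    ∃ (Q : Type) (_ : AddCommGroup Q) (_ : Module A Q) (_ : Module.Projective A Q)
      (a : N →ₗ[A] Q) (b : Q →ₗ[A] N), ∀ n, W (u n) - n = b (a n)

theorem step (hfg : ∀ a, g (f a) = a) (hI : ∀ b : B, (∀ i, g i = 0 → i * b = 0) → g b = 0)
    {pos : Prop} {Z' P : Type} [AddCommGroup Z'] [Module (B ⊗[k] Bᵐᵒᵖ) Z']
    [AddCommGroup P] [Module (B ⊗[k] Bᵐᵒᵖ) P] [Module.Projective (B ⊗[k] Bᵐᵒᵖ) P]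
    (io : Z' →ₗ[B ⊗[k] Bᵐᵒᵖ] P) (d : P →ₗ[B ⊗[k] Bᵐᵒᵖ] Z)
    (hio : Function.Injective io) (hd : Function.Surjective d)
    (hex : LinearMap.range io = LinearMap.ker d)
    (F : Type) [AddCommGroup F] [Module A F] [Module k F] [IsScalarTower k A F]
    [Module.Projective A F] (π : F →ₗ[A] N) (hπ : Function.Surjective π)
    (h : St f g M pos Z N) : St f g M True Z' (LinearMap.ker π) := by
  obtain ⟨hZ, u, v, W, hW, -, Q, _, _, _, a, b, hab⟩ := h
  have hdio : ∀ z, d (io z) = 0 := fun z => by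
    have : io z ∈ LinearMap.ker d := hex ▸ LinearMap.mem_range_self io z
    exact this
  have hP : Module.Projective Bᵐᵒᵖ (Res (rho k B) P) := res_projective _
  -- right splitting
  obtain ⟨s, hs⟩ := Module.projective_lifting_property (resMap (rho k B) d) LinearMap.id hd
  replace hs : ∀ z, resMap (rho k B) d (s z) = z := fun z => DFunLike.congr_fun hs z
  have hr0 : ∀ p : Res (rho k B) P, ∃ z : Res (rho k B) Z', resMap (rho k B) io z =
      p - s (resMap (rho k B) d p) := by
    intro p
    have : (toRes (rho k B) P).symm (p - s (resMap (rho k B) d p)) ∈ LinearMap.ker d := by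
      change resMap (rho k B) d (p - s (resMap (rho k B) d p)) = 0
      rw [map_sub, hs, sub_self]
    rw [← hex] at this
    exact this
  choose r hr using hr0
  have hr' : ∀ p, resMap (rho k B) io (r p) + s (resMap (rho k B) d p) = p := fun p => by
    rw [hr, sub_add_cancel]
  have hioR : Function.Injective (resMap (rho k B) io) := hio
  let rl : Res (rho k B) P →ₗ[Bᵐᵒᵖ] Res (rho k B) Z' :=
    { toFun := r
      map_add' := fun x y => by apply hioR; simp only [map_add, hr]; abel
      map_smul' := fun c x => by apply hioR; simp only [map_smul, hr, RingHom.id_apply, smul_sub] }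
  have hrio : ∀ z, r (resMap (rho k B) io z) = z := by
    intro z
    apply hioR
    rw [hr]
    have : resMap (rho k B) d (resMap (rho k B) io z) = 0 := hdio z
    rw [this, map_zero, sub_zero]
  have hZ' : Module.Projective Bᵐᵒᵖ (Res (rho k B) Z') :=
    Module.Projective.of_split (resMap (rho k B) io) rl (LinearMap.ext hrio)
  -- functoriality
  obtain ⟨Tio, hTio⟩ := TT.exists_map (M := M) f g P io
  obtain ⟨Td, hTd⟩ := TT.exists_map (M := M) f g Z d
  obtain ⟨Tr, hTr⟩ := TT.exists_addMap (M := M) f g (X := P) Z' rl.toAddMonoidHom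
    (fun b x => rl.map_smul b x)
  obtain ⟨Ts, hTs⟩ := TT.exists_addMap (M := M) f g (X := Z) P s.toAddMonoidHom
    (fun b x => s.map_smul b x)
  have e1 : ∀ t, Tr (Tio t) = t := by
    intro t
    induction t using TT.induction f g with
    | h0 => simp
    | hmk x m => rw [hTio, hTr]; congr 1; exact hrio x
    | hadd s t hs ht => rw [map_add, map_add, hs, ht]
  have e2 : ∀ t, Tio (Tr t) + Ts (Td t) = t := by
    intro t
    induction t using TT.induction f g with
    | h0 => simp
    | hmk x m =>
      rw [hTd, hTs, hTr, hTio, ← TT.mk_add_left]; congr 1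
      exact hr' x
    | hadd s t hs ht => 
      simp only [map_add]
      conv_rhs => rw [← hs, ← ht]
      abel
  have e3 : Function.Surjective Td := by
    intro t
    refine ⟨Ts t, ?_⟩
    induction t using TT.induction f g with
    | h0 => simp
    | hmk x m => rw [hTs, hTd]; congr 1; exact hs x
    | hadd s t hs ht => rw [map_add, map_add, hs, ht]
  have hTioinj : Function.Injective Tio := Function.LeftInverse.injective e1
  -- lifts
  obtain ⟨ut, hut⟩ := Module.projective_lifting_property Td (u ∘ₗ π) e3
  replace hut : ∀ x, Td (ut x) = u (π x) := fun z => DFunLike.congr_fun hut z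
  obtain ⟨vt, hvt⟩ := Module.projective_lifting_property (HomE.post g (M := M) π) (v ∘ₗ d)
    (HomE.post_surj g π hπ)
  replace hvt : ∀ x m, π (HomE.un g (vt x) m) = HomE.un g (v (d x)) m := fun z m => by
    rw [← HomE.post_un]
    exact congrArg (fun t => HomE.un g t m) (DFunLike.congr_fun hvt z)
  have hun : ∀ n : LinearMap.ker π, ∃ t, Tio t = ut n := by
    intro n
    refine ⟨Tr (ut n), ?_⟩
    have := e2 (ut n)
    rw [hut, n.2, map_zero, map_zero, add_zero] at this
    exact this
  choose un hun using hun
  let u' : LinearMap.ker π →ₗ[A] TT f g M Z' :=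
    { toFun := un
      map_add' := fun x y => by apply hTioinj; simp [hun]
      map_smul' := fun c x => by apply hTioinj; simp [hun] }
  have hvm : ∀ z m, HomE.un g (vt (io z)) m ∈ LinearMap.ker π := by
    intro z m
    rw [LinearMap.mem_ker, hvt, hdio]; simp
  let v0 : Z' → HomE g M (LinearMap.ker π) := fun z => (HomE.un g).symm
    { toFun := fun m => ⟨HomE.un g (vt (io z)) m, hvm z m⟩
      map_add' := fun x y => by ext; simp
      map_smul' := fun c x => by ext; simp }
  have hv0 : ∀ z, HomE.post g (LinearMap.ker π).subtype (v0 z) = vt (io z) := fun z => rfl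
  have hpinj : Function.Injective (HomE.post g (M := M) (LinearMap.ker π).subtype) := by
    intro x y hxy
    apply (HomE.un g).injective
    ext m
    exact congrArg (fun t => HomE.un g t m) hxy
  let v' : Z' →ₗ[B ⊗[k] Bᵐᵒᵖ] HomE g M (LinearMap.ker π) :=
    { toFun := v0
      map_add' := fun x y => by apply hpinj; simp only [map_add, hv0]
      map_smul' := fun c x => by apply hpinj; simp only [map_smul, hv0, RingHom.id_apply] }
  obtain ⟨Wt, hWt⟩ := TT.exists_eval f g hfg vt
  obtain ⟨W', hW'⟩ := TT.exists_eval f g hfg v'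
  have n1 : ∀ t, π (Wt t) = W (Td t) := by
    intro t
    induction t using TT.induction f g with
    | h0 => simp
    | hmk x m => rw [hWt, hTd, hW, hvt]
    | hadd s t hs ht => simp only [map_add, hs, ht]
  have n2 : ∀ t, (W' t : F) = Wt (Tio t) := by
    intro t
    induction t using TT.induction f g with
    | h0 => simp
    | hmk x m => rw [hTio, hWt, hW']; rfl
    | hadd s t hs ht => simp only [map_add, Submodule.coe_add, hs, ht]
  obtain ⟨bt, hbt⟩ := Module.projective_lifting_property π b hπ
  replace hbt : ∀ x, π (bt x) = b x := fun z => DFunLike.congr_fun hbt z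
  let c' : F →ₗ[A] F := Wt ∘ₗ ut - LinearMap.id - bt ∘ₗ a ∘ₗ π
  have hc' : ∀ x, c' x ∈ LinearMap.ker π := by
    intro x
    simp only [c', LinearMap.mem_ker, LinearMap.sub_apply, LinearMap.comp_apply, map_sub, n1, hut,
      LinearMap.id_apply, hbt, ← hab, sub_self]
  refine ⟨hZ', u', v', W', hW', ?_, F, inferInstance, inferInstance, inferInstance,
    (LinearMap.ker π).subtype, c'.codRestrict _ hc', ?_⟩
  · intro _ z hz
    apply hpinj
    rw [map_zero]
    change vt (io z) = 0
    apply kill_P g hI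
    intro i hi
    obtain ⟨c, hc, hic⟩ := hz i hi
    exact ⟨c, hc, by rw [← map_smul, hic, map_smul]⟩
  · intro n
    ext
    simp only [AddSubgroupClass.coe_sub, n2]
    change Wt (Tio (un n)) - _ = c' n
    rw [hun]
    simp [c']


theorem init (hfg : ∀ a, g (f a) = a) (e : Z ≃+ B)
    (he : ∀ b c x, e ((b ⊗ₜ[k] MulOpposite.op c) • x) = b * e x * c) :
    St f g M False Z M := by
  have hs : ∀ b c (y : B), (b ⊗ₜ[k] MulOpposite.op c) • e.symm y = e.symm (b * y * c) := by
    intro b c y; apply e.injective; rw [he]; simp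
  refine ⟨?_, ?_⟩
  · let q : Bᵐᵒᵖ ≃ₗ[Bᵐᵒᵖ] Res (rho k B) Z :=
      { MulOpposite.opAddEquiv.symm.trans (e.symm.trans (toRes (rho k B) Z)) with
        map_smul' := fun r c => by
          change toRes (rho k B) Z (e.symm ((r • c).unop)) =
            r • toRes (rho k B) Z (e.symm c.unop)
          rw [← toRes_smul, rho_apply]
          have := hs 1 r.unop c.unop
          rw [MulOpposite.op_unop] at this
          rw [this]; simp }
    exact Module.Projective.of_equiv' q
  · let v : Z →ₗ[B ⊗[k] Bᵐᵒᵖ] HomE g M M :=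
      { toFun := fun z => (HomE.un g).symm (Algebra.lsmul k k M (g (e z)))
        map_add' := fun x y => by simp
        map_smul' := fun b x => by
          apply (HomE.un g).injective
          rw [RingHom.id_apply, HomE.un_smul, AddEquiv.apply_symm_apply, AddEquiv.apply_symm_apply]
          ext m
          induction b with
          | zero =>
            have h0 : ((0 : B ⊗[k] Bᵐᵒᵖ) • x) = 0 := zero_smul (B ⊗[k] Bᵐᵒᵖ) x
            erw [h0]; simp
          | add s t hs ht => simp only [add_smul, map_add, LinearMap.add_apply, hs, ht]
          | tmul b c =>
            obtain ⟨c, rfl⟩ := MulOpposite.op_surjective c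
            rw [he, envAct_tmul]
            simp }
    have hv : ∀ z m, HomE.un g (v z) m = g (e z) • m := fun z m => rfl
    obtain ⟨W, hW⟩ := TT.exists_eval f g hfg v
    let u : M →ₗ[A] TT f g M Z :=
      { toFun := fun m => TT.mk f g (e.symm 1) m
        map_add' := fun x y => TT.mk_add_right f g _ _ _
        map_smul' := fun a m => by
          rw [RingHom.id_apply, TT.smul_mk, lam_apply]
          have h1 := hs (f a) 1 1
          have h2 := hs 1 (f a) 1
          rw [MulOpposite.op_one] at h1
          rw [h1]
          have := TT.mk_balance f g (e.symm 1) (f a) m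
          rw [rho_apply, h2, hfg] at this
          rw [← this]; simp }
    refine ⟨u, v, W, hW, False.elim, A, inferInstance, inferInstance, inferInstance, 0, 0, ?_⟩
    intro m
    change W (TT.mk f g (e.symm 1) m) - m = _
    rw [hW, hv]; simp

open CategoryTheory in
theorem pdim_of_ker (F : Type) [AddCommGroup F] [Module A F] [Module.Projective A F]
    (π : F →ₗ[A] N) (hπ : Function.Surjective π) (m : ℕ) :
    HasProjectiveDimensionLT (ModuleCat.of A N) (m + 2) ↔
    HasProjectiveDimensionLT (ModuleCat.of A (LinearMap.ker π)) (m + 1) := by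
  let S : ShortComplex (ModuleCat A) := ShortComplex.mk
    (ModuleCat.ofHom (LinearMap.ker π).subtype) (ModuleCat.ofHom π) (by
      ext x; exact x.2)
  have hS : S.ShortExact := by
    refine ShortComplex.ShortExact.mk' ?_ ?_ ?_
    · rw [ShortComplex.moduleCat_exact_iff]
      intro x hx
      exact ⟨⟨x, hx⟩, rfl⟩
    · exact (ModuleCat.mono_iff_injective _).2 Subtype.val_injective
    · exact (ModuleCat.epi_iff_surjective _).2 hπ
  exact hS.hasProjectiveDimensionLT_X₃_iff m
    (IsProjective.iff_projective (ModuleCat.of A F) |>.1 inferInstance)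

open CategoryTheory in
theorem chain (hfg : ∀ a, g (f a) = a) (hI : ∀ b : B, (∀ i, g i = 0 → i * b = 0) → g b = 0)
    (n : ℕ) (P : ℕ → ModuleCat (B ⊗[k] Bᵐᵒᵖ)) (d : ∀ i, P (i + 1) →ₗ[B ⊗[k] Bᵐᵒᵖ] P i)
    (hP : ∀ i, 1 ≤ i → i ≤ n → Module.Projective (B ⊗[k] Bᵐᵒᵖ) (P i))
    (h0 : Function.Surjective (d 0))
    (hex : ∀ i < n, LinearMap.range (d (i + 1)) = LinearMap.ker (d i))
    (e : P 0 ≃+ B) (he : ∀ b c x, e ((b ⊗ₜ[k] MulOpposite.op c) • x) = b * e x * c)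
    (j : ℕ) (hj : j ≤ n) :
    ∃ (N : Type) (_ : AddCommGroup N) (_ : Module A N) (_ : Module k N) (_ : IsScalarTower k A N),
      St f g M (0 < j) (LinearMap.range (d j)) N ∧
      ∀ m, HasProjectiveDimensionLT (ModuleCat.of A N) (m + 1) →
        HasProjectiveDimensionLT (ModuleCat.of A M) (m + 1 + j) := by
  induction j with
  | zero =>
    refine ⟨M, inferInstance, inferInstance, inferInstance, inferInstance, ?_, fun m h => h⟩
    simp only [lt_irrefl]
    refine init f g M _ hfg (((LinearEquiv.ofEq _ _ (LinearMap.range_eq_top.2 h0)).trans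
      Submodule.topEquiv).toAddEquiv.trans e) ?_
    intro b c x
    exact he b c x
  | succ j ih =>
    obtain ⟨N, _, _, _, _, hSt, hd⟩ := ih (by omega)
    have := hP (j + 1) (by omega) hj
    have hπ : Function.Surjective (Finsupp.linearCombination A (id : N → N)) :=
      fun x ↦ ⟨Finsupp.single x 1, by simp⟩
    have := step f g M _ hfg hI (LinearMap.range (d (j + 1))).subtype (d j).rangeRestrict
      Subtype.val_injective (d j).surjective_rangeRestrict
      (by rw [Submodule.range_subtype, hex j hj, LinearMap.ker_rangeRestrict]) (N →₀ A)
      (Finsupp.linearCombination A (id : N → N)) hπ hSt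
    refine ⟨LinearMap.ker (Finsupp.linearCombination A (id : N → N)), inferInstance,
      inferInstance, inferInstance, inferInstance, ?_, ?_⟩
    · convert this
      simp
    · intro m hm
      have := hd (m + 1) ((pdim_of_ker _ _ hπ m).2 hm)
      rw [show m + 1 + (j + 1) = m + 1 + 1 + j by ring]
      exact this

open CategoryTheory in
theorem pdim_killed (hfg : ∀ a, g (f a) = a)
    (hI : ∀ b : B, (∀ i, g i = 0 → i * b = 0) → g b = 0)
    (n : ℕ) (hn : 1 ≤ n) (P : ℕ → ModuleCat (B ⊗[k] Bᵐᵒᵖ))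
    (d : ∀ i, P (i + 1) →ₗ[B ⊗[k] Bᵐᵒᵖ] P i)
    (hP : ∀ i, 1 ≤ i → i ≤ n → Module.Projective (B ⊗[k] Bᵐᵒᵖ) (P i))
    (h0 : Function.Surjective (d 0))
    (hex : ∀ i < n, LinearMap.range (d (i + 1)) = LinearMap.ker (d i))
    (e : P 0 ≃+ B) (he : ∀ b c x, e ((b ⊗ₜ[k] MulOpposite.op c) • x) = b * e x * c)
    (z : P (n + 1)) (hz : ∀ x, ∃ t : B ⊗[k] Bᵐᵒᵖ, x = t • z)
    (hc : Cond g M z) :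
    HasProjectiveDimensionLT (ModuleCat.of A M) (n + 1) := by
  obtain ⟨N, _, _, _, _, ⟨-, u, v, W, hW, hv, Q, _, _, _, a, b, hab⟩, hd⟩ :=
    chain f g M hfg hI n P d hP h0 hex e he n le_rfl
  have hv0 : v = 0 := by
    have hz0 : v ((d n).rangeRestrict z) = 0 := by
      apply hv hn
      intro i hi
      obtain ⟨c, hc, hic⟩ := hc i hi
      exact ⟨c, hc, by rw [← map_smul, hic, map_smul]⟩
    ext1 x
    obtain ⟨y, rfl⟩ := (d n).surjective_rangeRestrict x
    obtain ⟨t, rfl⟩ := hz y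
    rw [map_smul, map_smul, hz0, smul_zero, LinearMap.zero_apply]
  have hW0 : ∀ t, W t = 0 := by
    intro t
    induction t using TT.induction f g with
    | h0 => simp
    | hmk x m => rw [hW, hv0]; simp
    | hadd s t hs ht => simp only [map_add, hs, ht, add_zero]
  have hN : Module.Projective A N := by
    refine Module.Projective.of_split (-a) b ?_
    ext x
    have := hab x
    rw [hW0, zero_sub] at this
    simp [← this]
  have := (IsProjective.iff_projective (ModuleCat.of A N) |>.1 hN)
  have := hd 0 inferInstance
  rw [show n + 1 = 0 + 1 + n by ring]
  exact this

end T
end Main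
end TPer

theorem TPer.projDimLE_of (R : Type) [Ring R] (d : ℕ) : ∀ (M : Type) [AddCommGroup M] [Module R M],
    CategoryTheory.HasProjectiveDimensionLT (ModuleCat.of R M) (d + 1) → ProjDimLE R M d := by
  induction d with
  | zero =>
    intro M _ _ h
    have hp : Module.Projective R M := (IsProjective.iff_projective (ModuleCat.of R M)).2
      (CategoryTheory.projective_iff_hasProjectiveDimensionLT_one.2 h)
    refine ⟨fun i => match i with
      | 0 => ModuleCat.of R M
      | _ + 1 => ModuleCat.of R PUnit, fun _ => 0, LinearMap.id, ?_, ?_, ?_, ?_, ?_⟩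
    · rintro (_ | i)
      · exact hp
      · dsimp only; infer_instance
    · exact Function.surjective_id
    · simp
    · intro i
      exact Subsingleton.elim (α := Submodule R PUnit) _ _
    · rintro (_ | i) hi
      · omega
      · dsimp only; infer_instance
  | succ d ih =>
    intro M _ _ h
    have hπ : Function.Surjective (Finsupp.linearCombination R (id : M → M)) :=
      fun x ↦ ⟨Finsupp.single x 1, by simp⟩
    obtain ⟨P, f, π, hP, hs, h0, hex, hd⟩ := ih _ ((TPer.pdim_of_ker _ _ hπ d).1 h)
    refine ⟨fun i => match i with
      | 0 => ModuleCat.of R (M →₀ R)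
      | i + 1 => P i, fun i => match i with
      | 0 => (Submodule.subtype _) ∘ₗ π
      | i + 1 => f i, Finsupp.linearCombination R (id : M → M), ?_, hπ, ?_, ?_, ?_⟩
    · rintro (_ | i)
      · dsimp only; infer_instance
      · exact hP i
    · change LinearMap.range (Submodule.subtype _ ∘ₗ π) = _
      rw [LinearMap.range_comp, LinearMap.range_eq_top.2 hs, Submodule.map_top,
        Submodule.range_subtype]
    · rintro (_ | i)
      · change LinearMap.range (f 0) = LinearMap.ker (Submodule.subtype _ ∘ₗ π)
        rw [h0, LinearMap.ker_comp, Submodule.ker_subtype]; rfl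
      · exact hex i
    · rintro (_ | i) hi
      · omega
      · exact hd i (by omega)

open CategoryTheory in
theorem TPer.pdim_nilp (R : Type) [Ring R] (J : Ideal R) (n : ℕ)
    (h : ∀ (M : Type) [AddCommGroup M] [Module R M], (∀ x ∈ J, ∀ m : M, x • m = 0) →
      HasProjectiveDimensionLT (ModuleCat.of R M) (n + 1)) (i : ℕ) :
    ∀ (M : Type) [AddCommGroup M] [Module R M], (∀ x ∈ J ^ i, ∀ m : M, x • m = 0) →
      HasProjectiveDimensionLT (ModuleCat.of R M) (n + 1) := by
  induction i with
  | zero =>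
    intro M _ _ hM
    apply h
    intro x _ m
    have := hM 1 (by rw [Submodule.pow_zero, Ideal.one_eq_top]; trivial) m
    rw [one_smul] at this
    rw [this, smul_zero]
  | succ i ih =>
    intro M _ _ hM
    let N : Submodule R M := J • (⊤ : Submodule R M)
    have h1 : HasProjectiveDimensionLT (ModuleCat.of R N) (n + 1) := by
      apply ih
      rintro x hx ⟨m, hm⟩
      ext
      change x • m = 0
      refine Submodule.smul_induction_on (p := fun m => x • m = 0) hm ?_ ?_
      · intro r hr y _
        rw [smul_smul]
        apply hM
        rw [Submodule.pow_succ]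
        exact Submodule.mul_mem_mul hx hr
      · intro y z hy hz; rw [smul_add, hy, hz, add_zero]
    have h3 : HasProjectiveDimensionLT (ModuleCat.of R (M ⧸ N)) (n + 1) := by
      apply h
      intro x hx m
      obtain ⟨m, rfl⟩ := N.mkQ_surjective m
      rw [← map_smul]
      exact (Submodule.Quotient.mk_eq_zero _).2 (Submodule.smul_mem_smul hx trivial)
    let S : ShortComplex (ModuleCat R) := ShortComplex.mk
      (ModuleCat.ofHom N.subtype) (ModuleCat.ofHom N.mkQ) (by
        ext x; simp)
    have hS : S.ShortExact := by
      refine ShortComplex.ShortExact.mk' ?_ ?_ ?_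
      · rw [ShortComplex.moduleCat_exact_iff]
        intro x hx
        exact ⟨⟨x, (Submodule.Quotient.mk_eq_zero _).1 hx⟩, rfl⟩
      · exact (ModuleCat.mono_iff_injective _).2 Subtype.val_injective
      · exact (ModuleCat.epi_iff_surjective _).2 N.mkQ_surjective
    exact hS.hasProjectiveDimensionLT_X₂ (n + 1) h1 h3


section DualBimodule

variable (k A : Type) [Field k] [Ring A] [Algebra k A]
theorem TPer.sqzero_ann (b : TrivialExtension k A)
    (h : ∀ i : TrivialExtension k A, i.fst = 0 → i * b = 0) : b.fst = 0 := by
  rw [← Module.forall_dual_apply_eq_zero_iff k]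
  intro ξ
  have h1 := congrArg TrivSqZeroExt.snd (h (TrivSqZeroExt.inr ξ) (by simp))
  have h2 := DFunLike.congr_fun h1 1
  simp only [TrivSqZeroExt.snd_mul, TrivSqZeroExt.fst_inr, zero_smul, zero_add,
    TrivSqZeroExt.snd_inr, TrivSqZeroExt.snd_zero] at h2
  change ξ (b.fst * 1) = 0 at h2
  rwa [mul_one] at h2

theorem TPer.ker_le_jac (i : TrivialExtension k A) (hi : i.fst = 0) :
    i ∈ Ring.jacobson (TrivialExtension k A) := by
  rw [← Ideal.jacobson_bot, Ideal.mem_jacobson_iff]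
  intro y
  refine ⟨1 - y * i, ?_⟩
  have : i * y * i = 0 := by
    ext <;> simp [hi]
  rw [Ideal.mem_bot]
  have h2 : (1 - y * i) * y * i + (1 - y * i) - 1 = - (y * (i * y * i)) := by
    simp only [sub_mul, one_mul, mul_assoc]; abel
  rw [h2, this]; simp

/-- Let `A` be a finite-dimensional `k`-algebra such that `A/rad A` is a
separable `k`-algebra. If the trivial extension algebra `T(A)` is twisted periodic, then `A`
has finite global dimension. -/
theorem finite_globalDimension_of_trivialExtension_twistedPeriodic
    [FiniteDimensional k A]
    (hsep : ∀ (S : Type) [Ring S] [Algebra k S] (π : A →ₐ[k] S),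
      Function.Surjective π → RingHom.ker π = Ideal.jacobson (⊥ : Ideal A) →
      ∀ (K : Type) [Field K] [Algebra k K], IsSemisimpleRing (K ⊗[k] S))
    (h : IsTwistedPeriodicAlgebra k (TrivialExtension k A)) :
    HasFiniteGlobalDimension A := by
  obtain ⟨n, φ, hn, P, d, e0, e1, hP, h0, h1, hex⟩ := h
  let f : A →ₐ[k] TrivialExtension k A := TrivSqZeroExt.inlAlgHom k A (Module.Dual k A)
  let g : TrivialExtension k A →ₐ[k] A := TrivSqZeroExt.fstHom k A (Module.Dual k A)
  have hfg : ∀ a, g (f a) = a := fun a => TrivSqZeroExt.fst_inl (Module.Dual k A) a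
  have hI : ∀ b : TrivialExtension k A, (∀ i, g i = 0 → i * b = 0) → g b = 0 :=
    TPer.sqzero_ann k A
  have hart : IsArtinianRing A := IsArtinianRing.of_finite k A
  let e : P 0 ≃+ TrivialExtension k A := e0.toAddEquiv
  have he : ∀ b c x, e ((b ⊗ₜ[k] MulOpposite.op c) • x) = b * e x * c := by
    intro b c x
    change e0 ((b ⊗ₜ[k] MulOpposite.op c) • x) = _
    rw [map_smul]
    exact (mul_assoc b (e x) c).symm
  let z : P (n + 1) := e1 (1 : TrivialExtension k A)
  have hact : ∀ b c : TrivialExtension k A, (b ⊗ₜ[k] MulOpposite.op c) • z =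
      e1 (b * φ c : TrivialExtension k A) := by
    intro b c
    refine (e1.map_smul (b ⊗ₜ[k] MulOpposite.op c) (1 : TrivialExtension k A)).symm.trans ?_
    refine congrArg e1 ?_
    change b * (1 * φ c) = b * φ c
    rw [one_mul]
  have hz : ∀ x, ∃ t : TrivialExtension k A ⊗[k] (TrivialExtension k A)ᵐᵒᵖ, x = t • z := by
    intro x
    have hb : ∀ b : TrivialExtension k A, b = b * φ 1 := fun b => by rw [map_one, mul_one]
    obtain ⟨b, rfl⟩ := e1.surjective x
    refine ⟨(b : TrivialExtension k A) ⊗ₜ[k] MulOpposite.op 1, ?_⟩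
    refine Eq.trans ?_ (hact b 1).symm
    refine congrArg e1 ?_
    exact hb b
  have hJ : ∀ (M : Type) [AddCommGroup M] [Module A M], (∀ x ∈ Ring.jacobson A, ∀ m : M, x • m = 0) →
      CategoryTheory.HasProjectiveDimensionLT (ModuleCat.of A M) (n + 1) := by
    intro M _ _ hM
    let : Module k M := Module.compHom M (algebraMap k A)
    have : IsScalarTower k A M := ⟨fun c a m => by
      rw [Algebra.smul_def, mul_smul]; rfl⟩
    refine TPer.pdim_killed f g M hfg hI n hn P d hP h0 hex e he z hz ?_
    intro i hi
    refine ⟨φ.symm i, ?_, ?_⟩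
    · intro m
      apply hM
      have a1 := TPer.ker_le_jac k A i hi
      have hs1 : Function.Surjective (φ.symm : TrivialExtension k A →+* TrivialExtension k A) :=
        φ.symm.surjective
      have hs2 : Function.Surjective (g : TrivialExtension k A →+* A) := fun a => ⟨f a, hfg a⟩
      have : RingHomSurjective (φ.symm : TrivialExtension k A →+* TrivialExtension k A) := ⟨hs1⟩
      have : RingHomSurjective (g : TrivialExtension k A →+* A) := ⟨hs2⟩
      have a2 := Ring.le_comap_jacobson (φ.symm : TrivialExtension k A →+* TrivialExtension k A) a1
      exact Ring.le_comap_jacobson (g : TrivialExtension k A →+* A) a2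
    · have b1 := hact i 1
      have b2 := hact 1 (φ.symm i)
      rw [MulOpposite.op_one] at b1
      rw [b1, b2]; simp
  obtain ⟨N, hN⟩ := IsArtinianRing.isNilpotent_jacobson_bot (R := A)
  rw [Ideal.jacobson_bot] at hN
  refine ⟨n, fun M _ _ => TPer.projDimLE_of A n M (TPer.pdim_nilp A _ n hJ N M ?_)⟩
  intro x hx m
  rw [hN] at hx
  rw [(Submodule.mem_bot A).1 hx, zero_smul]

end DualBimodule
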